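/- Every system of half-spaces of a central essential real hyperplane arrangement admits a sink. Precisely: let $\alpha_1,\dots,\alpha_n$ be nonzero linear forms on $\mathbb{R}^\ell$ whose kernels $H_i=\ker\alpha_i$ are pairwise distinct and satisfy $\bigcap_{i=1}^n H_i=\{0\}$, and let $\varepsilon\in\{+1,-1\}^n$ be any sign vector. Put $H_i^{\varepsilon_i}=\{x\in\mathbb{R}^\ell : \varepsilon_i\,\alpha_i(x)>0\}$. A chamber is a connected component of $\mathbb{R}^\ell\setminus\bigcup_{i=1}^n H_i$, and $H_i$ is a wall of a chamber $C$ if $\overline{C}\cap H_i$ spans $H_i$ (equivalently, has nonempty interior relative to $H_i$). Then there exists a chamber $C$ such that for every index $i$ for which $H_i$ is a wall of $C$, one has $C\subseteq H_i^{\varepsilon_i}$ (that is, $C$ is a sink). -/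

import Mathlib

namespace Arrangement

/-- Real vector space `ℝ^ℓ`. -/
abbrev Vsp (ℓ : ℕ) : Type := EuclideanSpace ℝ (Fin ℓ)

/-- The complement of the union of the hyperplanes `ker (α i)`. -/
def cmpl {ℓ n : ℕ} (α : Fin n → (Vsp ℓ →ₗ[ℝ] ℝ)) : Set (Vsp ℓ) := {x | ∀ i, α i x ≠ 0}

/-- `C` is a chamber: a connected component of the complement of the arrangement. -/
def IsChamber {ℓ n : ℕ} (α : Fin n → (Vsp ℓ →ₗ[ℝ] ℝ)) (C : Set (Vsp ℓ)) : Prop :=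
  ∃ x ∈ cmpl α, C = connectedComponentIn (cmpl α) x

/-- `H_i = ker (α i)` is a wall of the chamber `C`:
`closure C ∩ H_i` spans `H_i` (equivalently, since this is a convex cone containing `0`,
it has nonempty interior relative to `H_i`). -/
def IsWall {ℓ n : ℕ} (α : Fin n → (Vsp ℓ →ₗ[ℝ] ℝ)) (i : Fin n) (C : Set (Vsp ℓ)) : Prop :=
  Submodule.span ℝ (closure C ∩ {x | α i x = 0}) = LinearMap.ker (α i)

/-- The open half-space `H_i^{ε_i}`, for a sign `ε i = 1` or `ε i = -1`. -/
def halfSpace {ℓ n : ℕ} (α : Fin n → (Vsp ℓ →ₗ[ℝ] ℝ)) (ε : Fin n → ℝ) (i : Fin n) :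
    Set (Vsp ℓ) := {x | 0 < ε i * α i x}

/-- `C` is a sink of the system of half-spaces `(H_1^{ε_1}, …, H_n^{ε_n})`: a chamber that lies
in `H_i^{ε_i}` for each of its walls `H_i`. -/
def IsSink {ℓ n : ℕ} (α : Fin n → (Vsp ℓ →ₗ[ℝ] ℝ)) (ε : Fin n → ℝ) (C : Set (Vsp ℓ)) : Prop :=
  IsChamber α C ∧ ∀ i : Fin n, IsWall α i C → C ⊆ halfSpace α ε i

end Arrangement

/-!
Choose a chamber `C` for which the set of prescribed half-spaces containing it is maximal. If `C`
lay on the wrong side of one of its walls `H_i`, then crossing `H_i` and no other hyperplane would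
lead to a chamber that also lies in the `i`-th half-space. Such a crossing exists because the
hyperplanes are distinct: no other `H_j` contains the face `closure C ∩ H_i`, so a sum of points of
this face, one off each `H_j`, lies strictly on the side of `C` of every other hyperplane. If `p` is
this sum and `x ∈ C`, then for large `t` only `H_i` separates `t • p - x` from `x`.
-/

namespace Arrangement

theorem mul_pos_iff_of_mul_pos {R : Type*} [CommRing R] [LinearOrder R] [IsStrictOrderedRing R]
    {a b e : R} (he : e ≠ 0) (hab : 0 < a * b) : 0 < e * a ↔ 0 < e * b :=
  pos_iff_pos_of_mul_pos <| by
    rw [mul_mul_mul_comm]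
    exact mul_pos (mul_self_pos.2 he) hab

theorem exists_mem_span_forall_pos {ι R M N : Type*} [Finite ι] [Semiring R]
    [AddCommMonoid M] [Module R M] [AddCommMonoid N] [PartialOrder N] [IsOrderedCancelAddMonoid N]
    [Module R N] (f : ι → M →ₗ[R] N) {S : Set M} (hnonneg : ∀ i, ∀ p ∈ S, 0 ≤ f i p)
    (hne : ∀ i, ∃ p ∈ S, f i p ≠ 0) :
    ∃ p ∈ Submodule.span R S, ∀ i, 0 < f i p := by
  have := Fintype.ofFinite ι
  choose p hpS hp using hne
  refine ⟨∑ i, p i, sum_mem fun i _ ↦ Submodule.subset_span (hpS i), fun i ↦ ?_⟩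
  rw [map_sum]
  exact Finset.sum_pos' (fun j _ ↦ hnonneg i _ (hpS j))
    ⟨i, Finset.mem_univ i, (hnonneg i _ (hpS i)).lt_of_ne' (hp i)⟩

theorem exists_mem_apply_ne_zero_of_span_eq_ker {K V : Type*} [DivisionRing K] [AddCommGroup V]
    [Module K V] {f g : V →ₗ[K] K} (hf : f ≠ 0) (hg : g ≠ 0)
    (hfg : LinearMap.ker f ≠ LinearMap.ker g) {F : Set V}
    (hF : Submodule.span K F = LinearMap.ker f) : ∃ p ∈ F, g p ≠ 0 := by
  by_contra! h
  have hle : LinearMap.ker f ≤ LinearMap.ker g := hF ▸ Submodule.span_le.2 h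
  have hcoatom := LinearMap.isCoatom_ker_of_surjective (LinearMap.surjective hf)
  exact hfg ((hcoatom.le_iff_eq (mt LinearMap.ker_eq_top.1 hg)).1 hle).symm

section Crossing

variable {ι K V : Type*} [Finite ι] [Field K] [LinearOrder K] [IsStrictOrderedRing K]
  [AddCommGroup V] [Module K V] {α : ι → V →ₗ[K] K} {x : V} {i : ι}

theorem exists_mem_ker_forall_mul_pos (hα : ∀ j, α j ≠ 0)
    (hdist : Pairwise fun j k ↦ LinearMap.ker (α j) ≠ LinearMap.ker (α k))
    (hx : ∀ j, α j x ≠ 0) {F : Set V} (hF : ∀ p ∈ F, ∀ j, 0 ≤ α j x * α j p)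
    (hspan : Submodule.span K F = LinearMap.ker (α i)) :
    ∃ p ∈ LinearMap.ker (α i), ∀ j ≠ i, 0 < α j x * α j p := by
  have hne (j : {j // j ≠ i}) : ∃ p ∈ F, (α j x • α j) p ≠ 0 := by
    obtain ⟨p, hpF, hp⟩ :=
      exists_mem_apply_ne_zero_of_span_eq_ker (hα i) (hα j) (hdist j.2.symm) hspan
    exact ⟨p, hpF, mul_ne_zero (hx j) hp⟩
  obtain ⟨p, hp, hpos⟩ := exists_mem_span_forall_pos (fun j : {j // j ≠ i} ↦ α j x • α j)
    (fun j p hpF ↦ hF p hpF j) hne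
  exact ⟨p, hspan ▸ hp, fun j hj ↦ hpos ⟨j, hj⟩⟩

theorem exists_separated_only_by {p : V} (hx : α i x ≠ 0) (hpi : p ∈ LinearMap.ker (α i))
    (hp : ∀ j ≠ i, 0 < α j x * α j p) :
    ∃ z, α i x * α i z < 0 ∧ ∀ j ≠ i, 0 < α j x * α j z := by
  have hlarge : ∀ᶠ t : K in Filter.atTop,
      ∀ j : {j // j ≠ i}, α j x * α j x < t * (α j x * α j p) :=
    Filter.eventually_all.2 fun j ↦
      (Filter.tendsto_id.atTop_mul_const (hp j j.2)).eventually_gt_atTop _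
  obtain ⟨t, ht⟩ := hlarge.exists
  refine ⟨t • p - x, ?_, fun j hj ↦ ?_⟩
  · simpa [LinearMap.mem_ker.1 hpi] using hx
  · simpa [mul_sub, mul_left_comm] using ht ⟨j, hj⟩

end Crossing

section Preconnected

variable {X R : Type*} [TopologicalSpace X] [Ring R] [LinearOrder R] [IsStrictOrderedRing R]
  [TopologicalSpace R] [OrderClosedTopology R] {f : X → R} {s : Set X} {x y : X}

theorem mul_pos_of_isPreconnected (hs : IsPreconnected s) (hf : ContinuousOn f s)
    (hne : ∀ z ∈ s, f z ≠ 0) (hx : x ∈ s) (hy : y ∈ s) : 0 < f x * f y := by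
  by_contra! h
  suffices (0 : R) ∈ f '' s by
    obtain ⟨z, hz, hz0⟩ := this
    exact hne z hz hz0
  rcases mul_nonpos_iff.1 h with ⟨hx0, hy0⟩ | ⟨hx0, hy0⟩
  · exact hs.intermediate_value hy hx hf ⟨hy0, hx0⟩
  · exact hs.intermediate_value hx hy hf ⟨hx0, hy0⟩

theorem mul_nonneg_of_isPreconnected_of_mem_closure [ContinuousMul R] (hs : IsPreconnected s)
    (hf : Continuous f) (hne : ∀ z ∈ s, f z ≠ 0) (hx : x ∈ s) (hy : y ∈ closure s) :
    0 ≤ f x * f y :=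
  closure_minimal (fun _ hz ↦ (mul_pos_of_isPreconnected hs hf.continuousOn hne hx hz).le)
    (isClosed_le continuous_const (continuous_const.mul hf)) hy

end Preconnected

section Chamber

variable {ι V : Type*} [AddCommGroup V] [Module ℝ V] [TopologicalSpace V] {α : ι → V →ₗ[ℝ] ℝ}
  {x y : V}

/-- The chamber containing `x` of the arrangement of the hyperplanes `ker (α i)`, in a real vector
space with any topology; it is empty if `x` lies on one of the hyperplanes. -/
def chamber (α : ι → V →ₗ[ℝ] ℝ) (x : V) : Set V :=
  connectedComponentIn {y | ∀ i, α i y ≠ 0} x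

theorem mem_chamber_self (hx : ∀ i, α i x ≠ 0) : x ∈ chamber α x :=
  mem_connectedComponentIn hx

theorem isPreconnected_chamber : IsPreconnected (chamber α x) :=
  isPreconnected_connectedComponentIn

theorem apply_ne_zero_of_mem_chamber (hy : y ∈ chamber α x) (i : ι) : α i y ≠ 0 :=
  connectedComponentIn_subset _ _ hy i

theorem mul_pos_of_mem_chamber {i : ι} (hcont : Continuous (α i)) (hx : ∀ j, α j x ≠ 0)
    (hy : y ∈ chamber α x) : 0 < α i x * α i y :=
  mul_pos_of_isPreconnected isPreconnected_chamber hcont.continuousOn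
    (fun _ hz ↦ apply_ne_zero_of_mem_chamber hz i) (mem_chamber_self hx) hy

theorem exists_separated_only_by_wall [Finite ι] (hcont : ∀ j, Continuous (α j))
    (hα : ∀ j, α j ≠ 0)
    (hdist : Pairwise fun j k ↦ LinearMap.ker (α j) ≠ LinearMap.ker (α k))
    (hx : ∀ j, α j x ≠ 0) {i : ι}
    (hwall : Submodule.span ℝ (closure (chamber α x) ∩ {y | α i y = 0}) = LinearMap.ker (α i)) :
    ∃ z, (∀ j, α j z ≠ 0) ∧ α i x * α i z < 0 ∧ ∀ j ≠ i, 0 < α j x * α j z := by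
  have hface : ∀ p ∈ closure (chamber α x) ∩ {y | α i y = 0}, ∀ j, 0 ≤ α j x * α j p :=
    fun p hp j ↦ mul_nonneg_of_isPreconnected_of_mem_closure isPreconnected_chamber (hcont j)
      (fun _ hz ↦ apply_ne_zero_of_mem_chamber hz j) (mem_chamber_self hx) hp.1
  obtain ⟨p, hpi, hp⟩ := exists_mem_ker_forall_mul_pos hα hdist hx hface hwall
  obtain ⟨z, hzi, hz⟩ := exists_separated_only_by (hx i) hpi hp
  refine ⟨z, fun j ↦ ?_, hzi, hz⟩
  obtain rfl | hj := eq_or_ne j i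
  · exact right_ne_zero_of_mul hzi.ne
  · exact right_ne_zero_of_mul (hz j hj).ne'

end Chamber

end Arrangement

open Arrangement in
theorem exists_sink_general {ι V : Type*} [Finite ι] [AddCommGroup V] [Module ℝ V]
    [TopologicalSpace V] (α : ι → V →ₗ[ℝ] ℝ) (hcont : ∀ i, Continuous (α i)) (hα : ∀ i, α i ≠ 0)
    (hdist : Pairwise fun i j ↦ LinearMap.ker (α i) ≠ LinearMap.ker (α j))
    (ε : ι → ℝ) (hε : ∀ i, ε i ≠ 0) :
    ∃ x, (∀ i, α i x ≠ 0) ∧ ∀ i,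
      Submodule.span ℝ (closure (chamber α x) ∩ {y | α i y = 0}) = LinearMap.ker (α i) →
        chamber α x ⊆ {y | 0 < ε i * α i y} := by
  have hnonempty : {x | ∀ i, α i x ≠ 0}.Nonempty :=
    Module.Dual.exists_forall_ne_zero_of_forall_exists α fun i ↦ DFunLike.ne_iff.1 (hα i)
  obtain ⟨x, hx, hmax⟩ := Set.Finite.exists_maximalFor' (fun x ↦ {i | 0 < ε i * α i x}) _
    (Set.toFinite _) hnonempty
  refine ⟨x, hx, fun i hwall y hy ↦ ?_⟩
  suffices hxi : 0 < ε i * α i x from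
    (mul_pos_iff_of_mul_pos (hε i) (mul_pos_of_mem_chamber (hcont i) hx hy)).1 hxi
  by_contra hxi
  obtain ⟨z, hz, hzi, hzj⟩ := exists_separated_only_by_wall hcont hα hdist hx hwall
  have hsub : {j | 0 < ε j * α j x} ⊆ {j | 0 < ε j * α j z} := fun j hj ↦
    (mul_pos_iff_of_mul_pos (hε j) (hzj j fun hji ↦ hxi (hji ▸ hj))).1 hj
  have hzpos : 0 < ε i * α i z := by
    have hneg : 0 < ε i * -α i x := by
      rw [mul_neg, neg_pos]
      exact (not_lt.1 hxi).lt_of_ne (mul_ne_zero (hε i) (hx i))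
    exact (mul_pos_iff_of_mul_pos (hε i) (by rwa [neg_mul, neg_pos])).1 hneg
  exact hxi (hmax hz hsub hzpos)

/-- Every system of half-spaces of a central essential arrangement of (pairwise distinct)
hyperplanes `H_i = ker (α i)` admits a sink. -/
theorem exists_sink (ℓ n : ℕ) (α : Fin n → (Arrangement.Vsp ℓ →ₗ[ℝ] ℝ))
    (hα : ∀ i, α i ≠ 0)
    (hdist : ∀ i j, i ≠ j → LinearMap.ker (α i) ≠ LinearMap.ker (α j))
    (hess : (⋂ i, (LinearMap.ker (α i) : Set (Arrangement.Vsp ℓ))) = {0})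
    (ε : Fin n → ℝ) (hε : ∀ i, ε i = 1 ∨ ε i = -1) :
    ∃ C : Set (Arrangement.Vsp ℓ), Arrangement.IsSink α ε C := by
  obtain ⟨x, hx, hsink⟩ := exists_sink_general α
    (fun i ↦ (α i).continuous_of_finiteDimensional) hα (fun i j ↦ hdist i j) ε
    fun i ↦ by rcases hε i with h | h <;> simp [h]
  exact ⟨Arrangement.chamber α x, ⟨x, hx, rfl⟩, hsink⟩
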